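/- Let r ≥ 1 and let L = {k₁, …, k_r} be a set of r distinct integers all ≥ 2 with k₁ < … < k_r. Then there exists a reduced, finitely generated, atomic, commutative cancellative monoid H with atoms u_{i,j} (1 ≤ j ≤ k_i, 1 ≤ i ≤ r) satisfying u_{1,1}⋯u_{1,k₁} = … = u_{r,1}⋯u_{r,k_r} and 𝓛(H) = { {0}, {1} } ∪ { y + nL : y, n ∈ ℕ₀ }, whose catenary degree satisfies c(H) = 0 if r = 1 and c(H) = k_r if r ≥ 2. -/

import Mathlib

open Pointwise

/-- `H` is atomic: every non-unit is a finite product of atoms (irreducible elements). -/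
def MonoidAtomic (H : Type*) [CancelCommMonoid H] : Prop :=
  ∀ a : H, ¬ IsUnit a → ∃ l : Multiset H, (∀ x ∈ l, Irreducible x) ∧ l.prod = a

/-- `H` is reduced: the only unit is the identity. -/
def MonoidReduced (H : Type*) [CancelCommMonoid H] : Prop :=
  ∀ a : H, IsUnit a → a = 1

/-- The set of lengths `L(a)`: all `k ≥ 1` such that `a` is a product of `k` atoms,
together with `0` if `a` is a unit. -/
def setOfLengths {H : Type*} [CancelCommMonoid H] (a : H) : Set ℕ :=
  {k | (k = 0 ∧ IsUnit a) ∨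
    (1 ≤ k ∧ ∃ l : Multiset H, Multiset.card l = k ∧ (∀ x ∈ l, Irreducible x) ∧ l.prod = a)}

/-- The system of sets of lengths `𝓛(H) = { L(a) : a ∈ H }`. -/
def systemOfLengths (H : Type*) [CancelCommMonoid H] : Set (Set ℕ) :=
  {L | ∃ a : H, setOfLengths a = L}

/-- The `n`-fold sumset `nL = L + … + L`, with `0L = {0}`. -/
def nfoldSumset (L : Set ℕ) : ℕ → Set ℕ
  | 0 => {0}
  | n + 1 => L + nfoldSumset L n

/-- The factorizations of `a`: multisets of atoms with product `a`. -/
def factorizationsOf {H : Type*} [CancelCommMonoid H] (a : H) : Set (Multiset H) :=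
  {l | (∀ x ∈ l, Irreducible x) ∧ l.prod = a}

/-- The distance between two factorizations `z, z'`:
`max(|z \ (z ∩ z')|, |z' \ (z ∩ z')|)`. -/
noncomputable def factorizationDist {H : Type*} (z z' : Multiset H) : ℕ :=
  letI := Classical.decEq H
  max (Multiset.card (z - z ∩ z')) (Multiset.card (z' - z ∩ z'))

/-- `N` is a catenary bound for `a`: any two factorizations of `a` can be joined by a chain of
factorizations of `a` whose consecutive distances are at most `N`. -/
def IsCatenaryBound {H : Type*} [CancelCommMonoid H] (a : H) (N : ℕ) : Prop :=
  ∀ z ∈ factorizationsOf a, ∀ z' ∈ factorizationsOf a,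
    ∃ (s : ℕ) (c : Fin (s + 1) → Multiset H),
      c 0 = z ∧ c (Fin.last s) = z' ∧ (∀ i, c i ∈ factorizationsOf a) ∧
      ∀ i : Fin s, factorizationDist (c i.castSucc) (c i.succ) ≤ N

/-- The catenary degree `c(a) ∈ ℕ ∪ {∞}` of an element: the smallest catenary bound. -/
noncomputable def catenaryDegreeElem {H : Type*} [CancelCommMonoid H] (a : H) : ℕ∞ :=
  sInf {N : ℕ∞ | ∃ n : ℕ, N = (n : ℕ∞) ∧ IsCatenaryBound a n}

/-- The catenary degree `c(H) = sup { c(a) : a ∈ H }`. -/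
noncomputable def catenaryDegree (H : Type*) [CancelCommMonoid H] : ℕ∞ :=
  ⨆ a : H, catenaryDegreeElem a

/-!
Take the commutative monoid `H` presented by generators `u i j` and the relations
`∏ j, u i j = ∏ j, u i' j`, where row `i` has `k i` generators. Stripping off full rows, each
element becomes a row-free monomial `e` times a product of `n` rows, and its factorizations are
exactly `e` times *any* product of `n` rows. Hence its set of lengths is `|e| + nL`, every
factorization is reached from any other by exchanging one row at a time, which costs at most
`max (k i) (k i')`, and a product of a single row cannot be changed without replacing all of it.
-/

section SumsetsAndMultisets

variable {α : Type*}

lemma nfoldSumset_range (k : α → ℕ) (n : ℕ) :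
    nfoldSumset (Set.range k) n =
      (fun D : Multiset α ↦ (D.map k).sum) '' {D | Multiset.card D = n} := by
  induction n with
  | zero => simp [nfoldSumset]
  | succ n ih =>
    ext x
    simp only [nfoldSumset, ih, Set.mem_add, Set.mem_range, Set.mem_image, Set.mem_ofPred_eq]
    constructor
    · rintro ⟨_, ⟨i, rfl⟩, _, ⟨D, hD, rfl⟩, rfl⟩
      exact ⟨i ::ₘ D, by simp [hD], by simp⟩
    · rintro ⟨D, hD, rfl⟩
      obtain ⟨i, E, rfl, hE⟩ := Multiset.card_eq_succ_iff.1 hD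
      exact ⟨_, ⟨i, rfl⟩, _, ⟨E, by simpa using hE, rfl⟩, by simp⟩

lemma reflTransGen_exchange_of_card_eq {s t : Multiset α}
    (h : Multiset.card s = Multiset.card t) :
    Relation.ReflTransGen (fun s t ↦ ∃ a b u, s = a ::ₘ u ∧ t = b ::ₘ u) s t := by
  induction s using Multiset.induction generalizing t with
  | empty => rw [Multiset.card_eq_zero.1 h.symm]
  | cons a s ih =>
    obtain ⟨b, t, rfl, ht⟩ := Multiset.card_eq_succ_iff.1 (h.symm.trans (Multiset.card_cons a s))
    refine .head ⟨a, b, s, rfl, rfl⟩ ((ih ht.symm).lift (b ::ₘ ·) ?_)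
    rintro _ _ ⟨c, d, u, rfl, rfl⟩
    exact ⟨c, d, b ::ₘ u, Multiset.cons_swap .., Multiset.cons_swap ..⟩

end SumsetsAndMultisets

section Factorizations

variable {H : Type*}

lemma factorizationDist_add_left (x z z' : Multiset H) :
    factorizationDist (x + z) (x + z') = factorizationDist z z' := by
  classical
  simp only [factorizationDist]
  rw [← Multiset.add_inter_distrib, add_tsub_add_eq_tsub_left, add_tsub_add_eq_tsub_left]

lemma factorizationDist_le_max_card (z z' : Multiset H) :
    factorizationDist z z' ≤ max (Multiset.card z) (Multiset.card z') :=
  letI := Classical.decEq H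
  max_le_max (Multiset.card_le_card tsub_le_self) (Multiset.card_le_card tsub_le_self)

lemma factorizationDist_self (z : Multiset H) : factorizationDist z z = 0 := by
  classical
  have hinter : z ∩ z = z := inf_idem z
  simp [factorizationDist, hinter]

lemma card_le_factorizationDist_of_disjoint {z z' : Multiset H} (h : Disjoint z z') :
    Multiset.card z ≤ factorizationDist z z' := by
  classical
  simp [factorizationDist, Multiset.inter_eq_zero_iff_disjoint.2 h]

variable [CancelCommMonoid H]

lemma MonoidReduced.setOfLengths_eq_image_card (hH : MonoidReduced H) (a : H) :
    setOfLengths a = Multiset.card '' factorizationsOf a := by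
  ext n
  constructor
  · rintro (⟨rfl, ha⟩ | ⟨-, z, rfl, hz⟩)
    · exact ⟨0, ⟨by simp, by simp [hH a ha]⟩, rfl⟩
    · exact ⟨z, hz, rfl⟩
  · rintro ⟨z, hz, rfl⟩
    rcases Nat.eq_zero_or_pos (Multiset.card z) with h | h
    · exact .inl ⟨h, by simp [← hz.2, Multiset.card_eq_zero.1 h]⟩
    · exact .inr ⟨h, z, rfl, hz⟩

lemma isCatenaryBound_of_reflTransGen {a : H} {N : ℕ}
    (h : ∀ z ∈ factorizationsOf a, ∀ z' ∈ factorizationsOf a, Relation.ReflTransGen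
      (fun z z' ↦ z' ∈ factorizationsOf z.prod ∧ factorizationDist z z' ≤ N) z z') :
    IsCatenaryBound a N := by
  intro z hz z' hz'
  induction h z hz z' hz' using Relation.ReflTransGen.head_induction_on with
  | refl => exact ⟨0, fun _ ↦ z', rfl, rfl, fun _ ↦ hz', fun i ↦ i.elim0⟩
  | @head z y hzy _ ih =>
    obtain ⟨s, c, hc0, hcs, hmem, hdist⟩ := ih (hz.2 ▸ hzy.1)
    refine ⟨s + 1, Fin.cons z c, rfl, hcs, ?_, ?_⟩
    · simpa [Fin.forall_fin_succ] using ⟨hz, by simpa [Fin.forall_fin_succ] using hmem⟩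
    · refine Fin.cases ?_ fun i ↦ ?_
      · simpa [hc0] using hzy.2
      · simpa [← Fin.succ_castSucc] using hdist i

lemma IsCatenaryBound.exists_factorizationDist_le {a : H} {N : ℕ} (h : IsCatenaryBound a N)
    {z z' : Multiset H} (hz : z ∈ factorizationsOf a) (hz' : z' ∈ factorizationsOf a)
    (hne : z ≠ z') :
    ∃ y ∈ factorizationsOf a, y ≠ z ∧ factorizationDist z y ≤ N := by
  obtain ⟨s, c, hc0, hcs, hmem, hdist⟩ := h z hz z' hz'
  by_contra! hfar
  have hconst : ∀ i, c i = z := Fin.induction hc0 fun i hi ↦ by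
    by_contra hi'
    exact (hfar _ (hmem i.succ) hi').not_ge (hi ▸ hdist i)
  exact hne ((hconst _).symm.trans hcs)

lemma catenaryDegree_le {N : ℕ} (h : ∀ a : H, IsCatenaryBound a N) : catenaryDegree H ≤ N :=
  iSup_le fun a ↦ sInf_le ⟨N, rfl, h a⟩

lemma le_catenaryDegree {a : H} {m : ℕ} (h : ∀ N, IsCatenaryBound a N → m ≤ N) :
    m ≤ catenaryDegree H := by
  refine (le_sInf ?_).trans (le_iSup catenaryDegreeElem a)
  rintro _ ⟨N, rfl, hN⟩
  exact_mod_cast h N hN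

end Factorizations

section FullRows

variable {ι : Type*} {κ : ι → Type*}

/-- A monomial in the variables `⟨i, j⟩`, written as a multiset, is row-free if no row
`{⟨i, j⟩ | j}` divides it. These are the normal forms modulo full rows. -/
def IsRowFree (e : Multiset (Σ i, κ i)) : Prop :=
  ∀ i, ∃ j, ⟨i, j⟩ ∉ e

lemma isRowFree_replicate [∀ i, Nontrivial (κ i)] (n : ℕ) (p : Σ i, κ i) :
    IsRowFree (Multiset.replicate n p) := by
  intro i
  obtain ⟨j, hj⟩ := (sigma_mk_injective (i := i)).exists_ne p
  exact ⟨j, fun h ↦ hj (Multiset.eq_of_mem_replicate h)⟩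

lemma isRowFree_zero [∀ i, Nonempty (κ i)] : IsRowFree (0 : Multiset (Σ i, κ i)) :=
  fun _ ↦ ⟨Classical.arbitrary _, Multiset.notMem_zero _⟩

lemma isRowFree_singleton [∀ i, Nontrivial (κ i)] (p : Σ i, κ i) : IsRowFree {p} :=
  isRowFree_replicate 1 p

variable [∀ i, Fintype (κ i)]

variable (κ) in
/-- The product of the full rows `{⟨i, j⟩ | j}`, `i ∈ D`, counted with multiplicity and written
additively as a multiset of variables. -/
def fullRows (D : Multiset ι) : Multiset (Σ i, κ i) :=
  D.sigma fun _ ↦ Finset.univ.val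

@[simp]
lemma fullRows_zero : fullRows κ 0 = 0 :=
  Multiset.zero_sigma _

lemma fullRows_add (D E : Multiset ι) : fullRows κ (D + E) = fullRows κ D + fullRows κ E :=
  Multiset.add_sigma ..

lemma fullRows_cons (i : ι) (D : Multiset ι) :
    fullRows κ (i ::ₘ D) = fullRows κ {i} + fullRows κ D :=
  fullRows_add {i} D

lemma card_fullRows (D : Multiset ι) :
    Multiset.card (fullRows κ D) = (D.map fun i ↦ Fintype.card (κ i)).sum :=
  Multiset.card_sigma ..

lemma mem_fullRows {D : Multiset ι} {p : Σ i, κ i} : p ∈ fullRows κ D ↔ p.1 ∈ D := by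
  simp [fullRows]

lemma nodup_fullRows_singleton (i : ι) : (fullRows κ {i}).Nodup :=
  (Multiset.nodup_singleton i).sigma fun _ ↦ Finset.univ.nodup

lemma count_fullRows [DecidableEq ι] [DecidableEq (Σ i, κ i)] (D : Multiset ι) (p : Σ i, κ i) :
    (fullRows κ D).count p = D.count p.1 := by
  have hrow (i : ι) : (fullRows κ {i}).count p = ({i} : Multiset ι).count p.1 := by
    simp [Multiset.count_eq_of_nodup (nodup_fullRows_singleton i), mem_fullRows,
      Multiset.count_singleton]
  induction D using Multiset.induction with
  | empty => simp
  | cons i D ih =>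
    rw [fullRows_cons, Multiset.count_add, hrow, ih, ← Multiset.count_add, Multiset.singleton_add]

lemma fullRows_singleton_le {i : ι} {s : Multiset (Σ i, κ i)} (h : ∀ j, ⟨i, j⟩ ∈ s) :
    fullRows κ {i} ≤ s := by
  refine (Multiset.le_iff_subset (nodup_fullRows_singleton i)).2 ?_
  rintro ⟨i', j⟩ hp
  obtain rfl : i' = i := by simpa [mem_fullRows] using hp
  exact h j

lemma exists_isRowFree_add_fullRows [∀ i, Nonempty (κ i)] (s : Multiset (Σ i, κ i)) :
    ∃ e D, IsRowFree e ∧ s = e + fullRows κ D := by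
  induction s using Multiset.strongInductionOn with
  | ih s ih =>
  by_cases hs : IsRowFree s
  · exact ⟨s, 0, hs, by simp⟩
  · obtain ⟨i, hi⟩ : ∃ i, ∀ j, ⟨i, j⟩ ∈ s := by simpa [IsRowFree] using hs
    obtain ⟨t, rfl⟩ := Multiset.le_iff_exists_add.1 (fullRows_singleton_le hi)
    have hpos : 0 < fullRows κ {i} := by
      rw [pos_iff_ne_zero, ← Multiset.card_pos]
      simpa [card_fullRows] using Fintype.card_pos
    obtain ⟨e, D, he, rfl⟩ := ih t (lt_add_of_pos_left t hpos)
    exact ⟨e, i ::ₘ D, he, by rw [fullRows_cons, add_left_comm]⟩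

/-- Two monomials are identified if they agree up to exchanging full rows for equally many full
rows. Leaving the rows on the other side instead of subtracting them makes the congruence
cancellative on the nose. -/
def rowAddCon (κ : ι → Type*) [∀ i, Fintype (κ i)] : AddCon (Multiset (Σ i, κ i)) where
  r s t := ∃ D E : Multiset ι,
    Multiset.card D = Multiset.card E ∧ s + fullRows κ E = t + fullRows κ D
  iseqv :=
    { refl s := ⟨0, 0, rfl, rfl⟩
      symm := fun ⟨D, E, hcard, h⟩ ↦ ⟨E, D, hcard.symm, h.symm⟩
      trans := by
        rintro s t v ⟨D, E, hcard, h⟩ ⟨D', E', hcard', h'⟩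
        refine ⟨D + D', E + E', by simp [hcard, hcard'], ?_⟩
        rw [fullRows_add, fullRows_add, ← add_assoc, h, add_right_comm, h', add_right_comm,
          add_assoc] }
  add' := by
    rintro s t s' t' ⟨D, E, hcard, h⟩ ⟨D', E', hcard', h'⟩
    refine ⟨D + D', E + E', by simp [hcard, hcard'], ?_⟩
    rw [fullRows_add, fullRows_add, add_add_add_comm, h, h', add_add_add_comm]

lemma rowAddCon_add_fullRows {D E : Multiset ι} (h : Multiset.card D = Multiset.card E)
    (s : Multiset (Σ i, κ i)) : rowAddCon κ (s + fullRows κ D) (s + fullRows κ E) :=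
  ⟨D, E, h, add_right_comm ..⟩

lemma rowAddCon_add_left_cancel {s t v : Multiset (Σ i, κ i)}
    (h : rowAddCon κ (s + t) (s + v)) : rowAddCon κ t v := by
  obtain ⟨D, E, hcard, h⟩ := h
  exact ⟨D, E, hcard, by simpa only [add_assoc, add_right_inj] using h⟩

lemma IsRowFree.le_of_add_fullRows_eq {e s : Multiset (Σ i, κ i)} (he : IsRowFree e)
    {D E : Multiset ι} (h : s + fullRows κ D = e + fullRows κ E) : D ≤ E := by
  classical
  refine Multiset.le_iff_count.2 fun i ↦ ?_
  obtain ⟨j, hj⟩ := he i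
  have hcount := congrArg (Multiset.count ⟨i, j⟩) h
  simp only [Multiset.count_add, count_fullRows, Multiset.count_eq_zero_of_notMem hj] at hcount
  omega

lemma IsRowFree.rowAddCon_add_fullRows_iff {e s : Multiset (Σ i, κ i)} (he : IsRowFree e)
    (D : Multiset ι) :
    rowAddCon κ s (e + fullRows κ D) ↔
      ∃ E, Multiset.card E = Multiset.card D ∧ s = e + fullRows κ E := by
  constructor
  · rintro ⟨F, G, hcard, h⟩
    rw [add_assoc, ← fullRows_add] at h
    obtain ⟨E, hE⟩ := Multiset.le_iff_exists_add.1 (he.le_of_add_fullRows_eq h)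
    refine ⟨E, ?_, ?_⟩
    · have := congrArg Multiset.card hE
      simp only [Multiset.card_add] at this
      omega
    · rwa [hE, add_comm G, fullRows_add, ← add_assoc, add_left_inj] at h
  · rintro ⟨E, hcard, rfl⟩
    exact rowAddCon_add_fullRows hcard e

instance : AddCancelCommMonoid (rowAddCon κ).Quotient where
  add_left_cancel a b c := by
    induction a, b using AddCon.induction_on₂ with | _ s t
    induction c using AddCon.induction_on with | _ v
    intro h
    exact (AddCon.eq _).2 (rowAddCon_add_left_cancel ((AddCon.eq _).1 h))

end FullRows

/-- The commutative monoid presented by generators `u i j`, for `i : ι` and `j : κ i`, and the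
relations `∏ j, u i j = ∏ j, u i' j`. -/
def RowMonoid {ι : Type*} (κ : ι → Type*) [∀ i, Fintype (κ i)] : Type _ :=
  Multiplicative (rowAddCon κ).Quotient

namespace RowMonoid

variable {ι : Type*} {κ : ι → Type*} [∀ i, Fintype (κ i)]

instance : CancelCommMonoid (RowMonoid κ) :=
  inferInstanceAs (CancelCommMonoid (Multiplicative (rowAddCon κ).Quotient))

/-- The element of the row monoid represented by a monomial in the generators. -/
def mk (s : Multiset (Σ i, κ i)) : RowMonoid κ :=
  Multiplicative.ofAdd (s : (rowAddCon κ).Quotient)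

/-- The generators `u i j` of the row monoid. -/
def gen (p : Σ i, κ i) : RowMonoid κ :=
  mk {p}

lemma mk_surjective : Function.Surjective (mk (κ := κ)) :=
  AddCon.mk'_surjective

lemma mk_eq_mk {s t : Multiset (Σ i, κ i)} : mk s = mk t ↔ rowAddCon κ s t :=
  AddCon.eq _

@[simp]
lemma mk_zero : mk (0 : Multiset (Σ i, κ i)) = 1 :=
  rfl

lemma mk_add (s t : Multiset (Σ i, κ i)) : mk (s + t) = mk s * mk t :=
  rfl

@[simp]
lemma prod_map_gen (s : Multiset (Σ i, κ i)) : (s.map gen).prod = mk s := by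
  induction s using Multiset.induction with
  | empty => simp
  | cons p s ih => rw [Multiset.map_cons, Multiset.prod_cons, ih, gen, ← mk_add,
      Multiset.singleton_add]

lemma prod_gen (i : ι) : ∏ j : κ i, gen ⟨i, j⟩ = mk (fullRows κ {i}) := by
  rw [← prod_map_gen, fullRows, Multiset.sigma, Multiset.singleton_bind, Multiset.map_map]
  rfl

lemma prod_gen_eq_prod_gen (i i' : ι) : ∏ j : κ i, gen ⟨i, j⟩ = ∏ j : κ i', gen ⟨i', j⟩ := by
  rw [prod_gen, prod_gen, mk_eq_mk]
  simpa using rowAddCon_add_fullRows (D := {i}) (E := {i'}) rfl 0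

lemma fg [Finite ι] : Monoid.FG (RowMonoid κ) := by
  refine Monoid.fg_iff.2 ⟨Set.range gen, eq_top_iff.2 fun a _ ↦ ?_, Set.finite_range _⟩
  obtain ⟨s, rfl⟩ := mk_surjective a
  rw [← prod_map_gen]
  refine Submonoid.multiset_prod_mem _ _ fun x hx ↦ ?_
  obtain ⟨p, -, rfl⟩ := Multiset.mem_map.1 hx
  exact Submonoid.subset_closure ⟨p, rfl⟩

lemma mk_eq_mk_add_fullRows {e s : Multiset (Σ i, κ i)} (he : IsRowFree e) (D : Multiset ι) :
    mk s = mk (e + fullRows κ D) ↔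
      ∃ E, Multiset.card E = Multiset.card D ∧ s = e + fullRows κ E :=
  mk_eq_mk.trans (he.rowAddCon_add_fullRows_iff D)

lemma eq_of_mk_eq_mk {e s : Multiset (Σ i, κ i)} (he : IsRowFree e) (h : mk s = mk e) :
    s = e := by
  obtain ⟨E, hE, rfl⟩ := (mk_eq_mk_add_fullRows he 0).1 (by simpa using h)
  simp [Multiset.card_eq_zero.1 hE]

lemma factorizationDist_exchange_le {N : ℕ} (hN : ∀ i j, i ≠ j → Fintype.card (κ i) ≤ N)
    (e : Multiset (Σ i, κ i)) (i j : ι) (D : Multiset ι) :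
    factorizationDist ((e + fullRows κ (i ::ₘ D)).map gen)
      ((e + fullRows κ (j ::ₘ D)).map gen) ≤ N := by
  rcases eq_or_ne i j with rfl | hij
  · simp [factorizationDist_self]
  · simp only [← Multiset.singleton_add, add_comm {_} D, fullRows_add, ← add_assoc,
      Multiset.map_add, factorizationDist_add_left]
    refine (factorizationDist_le_max_card _ _).trans (max_le ?_ ?_)
    · simpa [card_fullRows] using hN i j hij
    · simpa [card_fullRows] using hN j i hij.symm

section Nonempty

variable [∀ i, Nonempty (κ i)]

lemma isUnit_mk {s : Multiset (Σ i, κ i)} : IsUnit (mk s) ↔ s = 0 := by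
  refine ⟨fun hs ↦ ?_, fun hs ↦ by simp [hs]⟩
  obtain ⟨b, hb⟩ := hs.exists_right_inv
  obtain ⟨t, rfl⟩ := mk_surjective b
  exact (add_eq_zero.1 (eq_of_mk_eq_mk isRowFree_zero hb)).1

lemma monoidReduced : MonoidReduced (RowMonoid κ) := by
  intro a ha
  obtain ⟨s, rfl⟩ := mk_surjective a
  simp [isUnit_mk.1 ha]

end Nonempty

variable [∀ i, Nontrivial (κ i)]

lemma gen_injective : Function.Injective (gen (κ := κ)) := fun _ q h ↦
  Multiset.singleton_inj.1 (eq_of_mk_eq_mk (isRowFree_singleton q) h)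

lemma irreducible_gen (p : Σ i, κ i) : Irreducible (gen p) := by
  refine ⟨by simp [gen, isUnit_mk], fun a b h ↦ ?_⟩
  obtain ⟨s, rfl⟩ := mk_surjective a
  obtain ⟨t, rfl⟩ := mk_surjective b
  have hst : s + t = {p} := eq_of_mk_eq_mk (isRowFree_singleton p) h.symm
  have hcard : Multiset.card s + Multiset.card t = 1 := by simpa using congrArg Multiset.card hst
  rw [isUnit_mk, isUnit_mk, ← Multiset.card_eq_zero, ← Multiset.card_eq_zero]
  omega

lemma irreducible_iff {a : RowMonoid κ} : Irreducible a ↔ ∃ p, gen p = a := by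
  refine ⟨fun ha ↦ ?_, fun ⟨p, hp⟩ ↦ hp ▸ irreducible_gen p⟩
  obtain ⟨s, rfl⟩ := mk_surjective a
  obtain ⟨p, hp⟩ := Multiset.exists_mem_of_ne_zero (isUnit_mk.not.1 ha.not_isUnit)
  obtain ⟨t, rfl⟩ := Multiset.exists_cons_of_mem hp
  have ht : IsUnit (mk t) :=
    (ha.isUnit_or_isUnit (mk_add {p} t)).resolve_left (irreducible_gen p).not_isUnit
  exact ⟨p, by simp [isUnit_mk.1 ht, gen]⟩

lemma factorizationsOf_mk (s : Multiset (Σ i, κ i)) :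
    factorizationsOf (mk s) = Multiset.map gen '' {t | mk t = mk s} := by
  ext z
  constructor
  · rintro ⟨hz, hprod⟩
    have : CanLift (RowMonoid κ) (Σ i, κ i) gen Irreducible := ⟨fun _ ↦ irreducible_iff.1⟩
    lift z to Multiset (Σ i, κ i) using hz
    exact ⟨z, by simpa using hprod, rfl⟩
  · rintro ⟨t, ht, rfl⟩
    exact ⟨Multiset.forall_mem_map_iff.2 fun p _ ↦ irreducible_gen p, by simpa using ht⟩

lemma factorizationsOf_mk_add_fullRows {e : Multiset (Σ i, κ i)} (he : IsRowFree e)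
    (D : Multiset ι) :
    factorizationsOf (mk (e + fullRows κ D)) =
      (fun E ↦ (e + fullRows κ E).map gen) '' {E | Multiset.card E = Multiset.card D} := by
  ext z
  simp only [factorizationsOf_mk, mk_eq_mk_add_fullRows he, Set.mem_image, Set.mem_ofPred_eq]
  grind

lemma monoidAtomic : MonoidAtomic (RowMonoid κ) := by
  intro a _
  obtain ⟨s, rfl⟩ := mk_surjective a
  exact ⟨s.map gen, Multiset.forall_mem_map_iff.2 fun p _ ↦ irreducible_gen p, prod_map_gen s⟩

lemma setOfLengths_mk_add_fullRows {e : Multiset (Σ i, κ i)} (he : IsRowFree e)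
    (D : Multiset ι) :
    setOfLengths (mk (e + fullRows κ D)) =
      {Multiset.card e} +
        nfoldSumset (Set.range fun i ↦ Fintype.card (κ i)) (Multiset.card D) := by
  rw [monoidReduced.setOfLengths_eq_image_card, factorizationsOf_mk_add_fullRows he,
    nfoldSumset_range, Set.singleton_add, Set.image_image, Set.image_image]
  simp only [Multiset.card_map, Multiset.card_add, card_fullRows]

lemma systemOfLengths_eq [Nonempty ι] :
    systemOfLengths (RowMonoid κ) =
      {S | ∃ y n : ℕ, S = {y} + nfoldSumset (Set.range fun i ↦ Fintype.card (κ i)) n} := by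
  ext S
  constructor
  · rintro ⟨a, rfl⟩
    obtain ⟨s, rfl⟩ := mk_surjective a
    obtain ⟨e, D, he, rfl⟩ := exists_isRowFree_add_fullRows s
    exact ⟨_, _, setOfLengths_mk_add_fullRows he D⟩
  · rintro ⟨y, n, rfl⟩
    obtain ⟨p⟩ : Nonempty (Σ i, κ i) := nonempty_sigma.2 ⟨Classical.arbitrary ι, inferInstance⟩
    refine ⟨mk (Multiset.replicate y p + fullRows κ (Multiset.replicate n p.1)), ?_⟩
    simp [setOfLengths_mk_add_fullRows (isRowFree_replicate y p)]

lemma isCatenaryBound {N : ℕ} (hN : ∀ i j, i ≠ j → Fintype.card (κ i) ≤ N) (a : RowMonoid κ) :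
    IsCatenaryBound a N := by
  obtain ⟨s, rfl⟩ := mk_surjective a
  obtain ⟨e, D, he, rfl⟩ := exists_isRowFree_add_fullRows s
  refine isCatenaryBound_of_reflTransGen ?_
  rw [factorizationsOf_mk_add_fullRows he]
  rintro _ ⟨E, hE, rfl⟩ _ ⟨F, hF, rfl⟩
  refine (reflTransGen_exchange_of_card_eq (hE.trans hF.symm)).lift
    (fun E ↦ (e + fullRows κ E).map gen) ?_
  rintro _ _ ⟨i, j, G, rfl, rfl⟩
  refine ⟨?_, factorizationDist_exchange_le hN e i j G⟩
  rw [prod_map_gen, factorizationsOf_mk_add_fullRows he]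
  exact ⟨j ::ₘ G, by simp, rfl⟩

lemma disjoint_map_gen_fullRows {i j : ι} (h : i ≠ j) :
    Disjoint ((fullRows κ {i}).map gen) ((fullRows κ {j}).map gen) := by
  refine Multiset.disjoint_map_map.2 fun p hp q hq hpq ↦ h ?_
  rw [mem_fullRows, Multiset.mem_singleton] at hp hq
  rw [← hp, ← hq, gen_injective hpq]

lemma card_le_catenaryDegree [Nontrivial ι] (i : ι) :
    Fintype.card (κ i) ≤ catenaryDegree (RowMonoid κ) := by
  have hfac : factorizationsOf (mk (fullRows κ {i})) =
      Set.range fun l ↦ (fullRows κ {l}).map gen := by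
    have := factorizationsOf_mk_add_fullRows (κ := κ) isRowFree_zero {i}
    simp only [zero_add, Multiset.card_singleton, Multiset.card_eq_one] at this
    rw [this]
    ext z
    simp only [Set.mem_image, Set.mem_range, Set.mem_ofPred_eq]
    grind
  have hcard : Multiset.card ((fullRows κ {i}).map gen) = Fintype.card (κ i) := by
    simp [card_fullRows]
  refine le_catenaryDegree (a := mk (fullRows κ {i})) fun N hN ↦ ?_
  obtain ⟨j, hj⟩ := exists_ne i
  have hne : (fullRows κ {i}).map gen ≠ (fullRows κ {j}).map gen := by
    refine (disjoint_map_gen_fullRows hj.symm).ne (Multiset.card_pos.1 ?_)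
    exact hcard ▸ Fintype.card_pos
  obtain ⟨_, hy, hne', hdist⟩ :=
    hN.exists_factorizationDist_le (hfac ▸ ⟨i, rfl⟩) (hfac ▸ ⟨j, rfl⟩) hne
  rw [hfac] at hy
  obtain ⟨l, rfl⟩ := hy
  have hil : i ≠ l := by rintro rfl; exact hne' rfl
  exact hcard ▸ (card_le_factorizationDist_of_disjoint (disjoint_map_gen_fullRows hil)).trans hdist

lemma catenaryDegree_of_subsingleton [Subsingleton ι] : catenaryDegree (RowMonoid κ) = 0 :=
  nonpos_iff_eq_zero.1 <|
    catenaryDegree_le fun a ↦ isCatenaryBound (fun _ _ h ↦ (h (Subsingleton.elim _ _)).elim) a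

lemma catenaryDegree_eq_iSup [Nontrivial ι] :
    catenaryDegree (RowMonoid κ) = ⨆ i, (Fintype.card (κ i) : ℕ∞) := by
  refine le_antisymm ?_ (iSup_le card_le_catenaryDegree)
  cases h : ⨆ i, (Fintype.card (κ i) : ℕ∞) with
  | top => exact le_top
  | coe N =>
    refine catenaryDegree_le fun a ↦ isCatenaryBound (fun i _ _ ↦ ?_) a
    exact_mod_cast (le_iSup (fun i ↦ (Fintype.card (κ i) : ℕ∞)) i).trans_eq h

end RowMonoid

theorem realization_with_catenary_degree_general.{v}
    {ι : Type v} [Nonempty ι] (k : ι → ℕ) (hk2 : ∀ i, 2 ≤ k i) :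
    ∃ (H : Type v) (_ : CancelCommMonoid H) (u : (i : ι) → Fin (k i) → H),
      MonoidReduced H ∧ (Finite ι → Monoid.FG H) ∧ MonoidAtomic H ∧
      Function.Injective (fun p : Σ i, Fin (k i) ↦ u p.1 p.2) ∧
      {a : H | Irreducible a} = {a : H | ∃ i j, a = u i j} ∧
      (∀ i i', ∏ j, u i j = ∏ j, u i' j) ∧
      systemOfLengths H = {S | ∃ y n : ℕ, S = {y} + nfoldSumset (Set.range k) n} ∧
      (Subsingleton ι → catenaryDegree H = 0) ∧
      (Nontrivial ι → catenaryDegree H = ⨆ i, (k i : ℕ∞)) := by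
  have (i : ι) : Nontrivial (Fin (k i)) := Fin.nontrivial_iff_two_le.2 (hk2 i)
  refine ⟨RowMonoid fun i ↦ Fin (k i), inferInstance, fun i j ↦ RowMonoid.gen ⟨i, j⟩,
    RowMonoid.monoidReduced, fun _ ↦ RowMonoid.fg, RowMonoid.monoidAtomic,
    RowMonoid.gen_injective, ?_, RowMonoid.prod_gen_eq_prod_gen, ?_,
    fun _ ↦ RowMonoid.catenaryDegree_of_subsingleton, fun _ ↦ ?_⟩
  · ext a
    simp [RowMonoid.irreducible_iff, eq_comm]
  · simpa using RowMonoid.systemOfLengths_eq (κ := fun i ↦ Fin (k i))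
  · simpa using RowMonoid.catenaryDegree_eq_iSup (κ := fun i ↦ Fin (k i))

/-- For `r ≥ 1` and `L = {k₁, …, k_r}` with `2 ≤ k₁ < … < k_r`, there is a reduced, finitely
generated, atomic, commutative cancellative monoid `H` with atoms `u i j` satisfying
`u_{1,1}⋯u_{1,k₁} = … = u_{r,1}⋯u_{r,k_r}`,
`𝓛(H) = {{0}, {1}} ∪ { y + nL : y, n ∈ ℕ }`, whose catenary degree is `0` if `r = 1` and
`k_r` if `r ≥ 2`. -/
theorem realization_with_catenary_degree
    (r : ℕ) (hr : 1 ≤ r) (k : Fin r → ℕ) (hk2 : ∀ i, 2 ≤ k i)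
    (hkmono : StrictMono k) (L : Set ℕ) (hL : L = Set.range k) :
    ∃ (H : Type) (_ : CancelCommMonoid H) (u : (i : Fin r) → Fin (k i) → H),
      MonoidReduced H ∧ Monoid.FG H ∧ MonoidAtomic H ∧
      Function.Injective (fun p : Σ i : Fin r, Fin (k i) => u p.1 p.2) ∧
      {a : H | Irreducible a} = {a : H | ∃ i j, a = u i j} ∧
      (∀ i : Fin r, (∏ j : Fin (k i), u i j) = ∏ j : Fin (k ⟨0, hr⟩), u ⟨0, hr⟩ j) ∧
      systemOfLengths H =
        {({0} : Set ℕ), {1}} ∪ {S | ∃ y n : ℕ, S = ({y} : Set ℕ) + nfoldSumset L n} ∧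
      (r = 1 → catenaryDegree H = 0) ∧
      (2 ≤ r → catenaryDegree H = (k ⟨r - 1, by omega⟩ : ℕ∞)) := by
  subst hL
  have : Nonempty (Fin r) := ⟨⟨0, hr⟩⟩
  obtain ⟨H, inst, u, hred, hfg, hatomic, hinj, hirr, hprod, hlen, hone, htwo⟩ :=
    realization_with_catenary_degree_general k hk2
  have hbase : {({0} : Set ℕ), {1}} ⊆
      {S | ∃ y n : ℕ, S = ({y} : Set ℕ) + nfoldSumset (Set.range k) n} := by
    rintro _ (rfl | rfl)
    exacts [⟨0, 0, by simp [nfoldSumset]⟩, ⟨1, 0, by simp [nfoldSumset]⟩]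
  refine ⟨H, inst, u, hred, hfg inferInstance, hatomic, hinj, hirr, fun i ↦ hprod i _,
    hlen.trans (Set.union_eq_right.2 hbase).symm, fun h ↦ ?_, fun h ↦ ?_⟩
  · exact hone (Fin.subsingleton_iff_le_one.2 h.le)
  · rw [htwo (Fin.nontrivial_iff_two_le.2 h)]
    refine le_antisymm (iSup_le fun i ↦ ?_) (le_iSup (fun i ↦ (k i : ℕ∞)) _)
    exact_mod_cast hkmono.monotone (Fin.mk_le_mk.2 (by omega) : i ≤ _)
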